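/- arXiv:2411.14305 — 2 statements merged into one kernel-verified Lean document; each statement's English description precedes it below -/
import Mathlib

section
/- Under the constraint system together with the sparse bounded t-th moment assumption, for every k-sparse unit vector v one has ⟨v, μ − μ*⟩ ≤ 2·M^{1/t} / (1 − 2ε)^{1/t}. -/
open Finset MeasureTheory
open scoped BigOperators InnerProductSpace

/-- A vector `v ∈ ℝ^d` is a `k`-sparse unit vector if `‖v‖ = 1` and at most `k` of its
coordinates are nonzero. -/
def IsSparseUnitVector (d k : ℕ) (v : EuclideanSpace ℝ (Fin d)) : Prop :=
  ‖v‖ = 1 ∧ ∃ s : Finset (Fin d), s.card ≤ k ∧ ∀ i, i ∉ s → v i = 0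

/-!
Both samples `x` and `xs` agree with `z` off an `ε` fraction of the indices, hence they agree with
each other on a set `s` of at least `(1 - 2 * ε) * n` indices. On `s` the distance between the two
centres, as a constant function of the index, is at most the sum of the distances of the common
sample to either centre, so Minkowski's inequality in `ℓᵖ(s)` bounds `#s ^ (1 / p)` times that
distance by the sum of the two `ℓᵖ` deviations. For a fixed direction `v`, distances are measured
by the seminorm `|⟪v, ·⟫|`.
-/

section Agreement

variable {ι α : Type*} [Fintype ι] {x y z : ι → α} {w u : ι → ℝ}

theorem sum_add_sum_sub_card_le_card_filter_eq [DecidablePred fun i ↦ x i = y i]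
    (hw : ∀ i, w i ≤ 1) (hu : ∀ i, u i ≤ 1)
    (hwz : ∀ i, w i ≠ 0 → z i = x i) (huz : ∀ i, u i ≠ 0 → z i = y i) :
    ∑ i, w i + ∑ i, u i - Fintype.card ι ≤ #{i | x i = y i} := by
  have pointwise (i : ι) : w i + u i - 1 ≤ if x i = y i then 1 else 0 := by
    split_ifs with hxy
    · linarith [hw i, hu i]
    · by_cases hwi : w i = 0
      · linarith [hu i]
      · have hui : u i = 0 := by
          by_contra hui
          exact hxy ((hwz i hwi).symm.trans (huz i hui))
        linarith [hw i]
  calc ∑ i, w i + ∑ i, u i - Fintype.card ι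
      = ∑ i, (w i + u i - 1) := by simp [sum_add_distrib, sum_sub_distrib]
    _ ≤ ∑ i, if x i = y i then 1 else 0 := sum_le_sum fun i _ ↦ pointwise i
    _ = #{i | x i = y i} := by simp

theorem exists_finset_mul_card_le_forall_eq {ε : ℝ} (hw : ∀ i, w i ≤ 1) (hu : ∀ i, u i ≤ 1)
    (hwz : ∀ i, w i ≠ 0 → z i = x i) (huz : ∀ i, u i ≠ 0 → z i = y i)
    (hw_expect : 1 - ε ≤ 𝔼 i, w i) (hu_expect : 1 - ε ≤ 𝔼 i, u i) :
    ∃ s : Finset ι, (1 - 2 * ε) * Fintype.card ι ≤ #s ∧ ∀ i ∈ s, x i = y i := by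
  classical
  refine ⟨({i | x i = y i} : Finset ι), ?_, fun _ hi ↦ (mem_filter.1 hi).2⟩
  calc (1 - 2 * ε) * Fintype.card ι
      = Fintype.card ι * (1 - ε) + Fintype.card ι * (1 - ε) - Fintype.card ι := by ring
    _ ≤ Fintype.card ι * 𝔼 i, w i + Fintype.card ι * 𝔼 i, u i - Fintype.card ι := by gcongr
    _ = ∑ i, w i + ∑ i, u i - Fintype.card ι := by simp only [Fintype.card_mul_expect]
    _ ≤ #{i | x i = y i} := sum_add_sum_sub_card_le_card_filter_eq hw hu hwz huz

end Agreement

section Expect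

theorem one_div_mul_sum_eq_expect {n : ℕ} (f : Fin n → ℝ) :
    (1 / (n : ℝ)) * ∑ i, f i = 𝔼 i, f i := by
  rw [Fintype.expect_eq_sum_div_card, Fintype.card_fin, one_div_mul_eq_div]

variable {ι : Type*} [Fintype ι]

theorem sum_le_card_mul_of_expect_le {f : ι → ℝ} {M : ℝ} (hf : ∀ i, 0 ≤ f i)
    (hfM : 𝔼 i, f i ≤ M) (s : Finset ι) : ∑ i ∈ s, f i ≤ Fintype.card ι * M := by
  calc ∑ i ∈ s, f i
      ≤ ∑ i, f i := sum_le_univ_sum_of_nonneg hf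
    _ = Fintype.card ι * 𝔼 i, f i := (Fintype.card_mul_expect f).symm
    _ ≤ Fintype.card ι * M := by gcongr

theorem expect_abs_rpow_le_of_sq_expect_pow_le_sq {t : ℕ} (ht : Even t)
    {M : ℝ} (hM : 0 ≤ M) {f : ι → ℝ} (hf : (𝔼 i, f i ^ t) ^ 2 ≤ M ^ 2) :
    𝔼 i, |f i| ^ (t : ℝ) ≤ M := by
  simp only [Real.rpow_natCast, ht.pow_abs]
  exact le_of_abs_le (abs_le_of_sq_le_sq hf hM)

end Expect

section Seminorm

variable {ι E S : Type*} [FunLike S E ℝ] {p : ℝ}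

theorem card_rpow_mul_map_sub_le [AddGroup E] [AddGroupSeminormClass S E ℝ] (q : S) (hp : 1 ≤ p)
    (s : Finset ι) {x y : ι → E} (hxy : ∀ i ∈ s, x i = y i) (a b : E) :
    (#s : ℝ) ^ (1 / p) * q (a - b) ≤
      (∑ i ∈ s, q (x i - a) ^ p) ^ (1 / p) + (∑ i ∈ s, q (y i - b) ^ p) ^ (1 / p) := by
  have hp0 : 0 < p := one_pos.trans_le hp
  have triangle : ∀ i ∈ s, q (a - b) ≤ q (x i - a) + q (y i - b) := fun i hi ↦ by
    rw [map_sub_rev q (x i) a, ← hxy i hi]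
    exact le_map_sub_add_map_sub q a (x i) b
  calc (#s : ℝ) ^ (1 / p) * q (a - b)
      = (∑ _i ∈ s, q (a - b) ^ p) ^ (1 / p) := by
        rw [sum_const, nsmul_eq_mul, Real.mul_rpow (by positivity) (by positivity),
          one_div, Real.rpow_rpow_inv (apply_nonneg q _) hp0.ne']
    _ ≤ (∑ i ∈ s, (q (x i - a) + q (y i - b)) ^ p) ^ (1 / p) := by
        gcongr with i hi
        exact triangle i hi
    _ ≤ (∑ i ∈ s, q (x i - a) ^ p) ^ (1 / p) + (∑ i ∈ s, q (y i - b) ^ p) ^ (1 / p) :=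
        Real.Lp_add_le_of_nonneg s hp (fun _ _ ↦ apply_nonneg q _) (fun _ _ ↦ apply_nonneg q _)

theorem map_sub_le_of_mul_card_le_card [Fintype ι] [Nonempty ι] [AddGroup E]
    [AddGroupSeminormClass S E ℝ] (q : S) (hp : 1 ≤ p) {M c : ℝ} (hc : 0 < c) {s : Finset ι}
    (hs : c * Fintype.card ι ≤ #s) {x y : ι → E} (hxy : ∀ i ∈ s, x i = y i) {a b : E}
    (hx : 𝔼 i, q (x i - a) ^ p ≤ M) (hy : 𝔼 i, q (y i - b) ^ p ≤ M) :
    q (a - b) ≤ 2 * M ^ (1 / p) / c ^ (1 / p) := by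
  have rpow_nonneg (e : E) : 0 ≤ q e ^ p := Real.rpow_nonneg (apply_nonneg q e) p
  have hM : 0 ≤ M := hx.trans' (expect_nonneg fun _ _ ↦ rpow_nonneg _)
  have hcard : 0 < (Fintype.card ι : ℝ) ^ (1 / p) := by positivity
  rw [le_div_iff₀' (by positivity)]
  refine le_of_mul_le_mul_left ?_ hcard
  calc (Fintype.card ι : ℝ) ^ (1 / p) * (c ^ (1 / p) * q (a - b))
      = (c * Fintype.card ι) ^ (1 / p) * q (a - b) := by
        rw [Real.mul_rpow hc.le (by positivity)]; ring
    _ ≤ (#s : ℝ) ^ (1 / p) * q (a - b) := by gcongr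
    _ ≤ (∑ i ∈ s, q (x i - a) ^ p) ^ (1 / p) + (∑ i ∈ s, q (y i - b) ^ p) ^ (1 / p) :=
        card_rpow_mul_map_sub_le q hp s hxy a b
    _ ≤ (Fintype.card ι * M) ^ (1 / p) + (Fintype.card ι * M) ^ (1 / p) := by
        gcongr
        · exact sum_le_card_mul_of_expect_le (fun _ ↦ rpow_nonneg _) hx s
        · exact sum_le_card_mul_of_expect_le (fun _ ↦ rpow_nonneg _) hy s
    _ = (Fintype.card ι : ℝ) ^ (1 / p) * (2 * M ^ (1 / p)) := by
        rw [Real.mul_rpow (by positivity) hM]; ring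

theorem sparse_mean_identifiability_general [Fintype ι] [AddCommGroup E] [Module ℝ E]
    [AddGroupSeminormClass S E ℝ] (q : S) (hp : 1 ≤ p) {M ε : ℝ} (hε : ε < 1 / 2)
    {z x xs : ι → E} {w ws : ι → ℝ} (hw : ∀ i, w i ≤ 1) (hwz : ∀ i, w i • (z i - x i) = 0)
    (hws : ∀ i, ws i ≤ 1) (hwsz : ∀ i, ws i • (z i - xs i) = 0)
    (hw_expect : 1 - ε ≤ 𝔼 i, w i) (hws_expect : 1 - ε ≤ 𝔼 i, ws i) {a b : E}
    (hx : 𝔼 i, q (x i - a) ^ p ≤ M) (hxs : 𝔼 i, q (xs i - b) ^ p ≤ M) :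
    q (a - b) ≤ 2 * M ^ (1 / p) / (1 - 2 * ε) ^ (1 / p) := by
  have : Nonempty ι := by
    by_contra! hι
    simp only [univ_eq_empty, expect_empty] at hw_expect
    linarith
  have eq_of_ne_zero {c : ℝ} {e e' : E} (h : c • (e - e') = 0) (hc : c ≠ 0) : e = e' :=
    sub_eq_zero.1 ((smul_eq_zero_iff_right hc).1 h)
  obtain ⟨s, hs, hxxs⟩ := exists_finset_mul_card_le_forall_eq hw hws
    (fun i ↦ eq_of_ne_zero (hwz i)) (fun i ↦ eq_of_ne_zero (hwsz i)) hw_expect hws_expect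
  exact map_sub_le_of_mul_card_le_card q hp (by linarith) hs hxxs hx hxs

end Seminorm

/-- Deterministic core of Theorem 3.2: robust sparse mean estimation near the breakdown
point, `⟨v, μ − μ*⟩ ≤ 2·M^(1/t)/(1 − 2ε)^(1/t)` for every `k`-sparse unit vector `v`. -/
theorem sparse_mean_identifiability
    (n d k t : ℕ) (hn : 1 ≤ n) (hd : 1 ≤ d) (hk1 : 1 ≤ k) (hkd : k ≤ d)
    (ht : 2 ≤ t) (htpow : ∃ m : ℕ, t = 2 ^ m)
    (M : ℝ) (hM : 0 < M)
    (ε : ℝ) (hε0 : 0 ≤ ε) (hε : ε < 1 / 2)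
(z x xs : Fin n → EuclideanSpace ℝ (Fin d)) (w ws : Fin n → ℝ)
    (hw : ∀ i, w i ^ 2 = w i)
    (hwz : ∀ i, w i • (z i - x i) = 0)
    (hws : ∀ i, ws i ^ 2 = ws i)
    (hwsz : ∀ i, ws i • (z i - xs i) = 0)
    (hwsum : 1 - ε ≤ (1 / (n : ℝ)) * ∑ i, w i)
    (hwssum : 1 - ε ≤ (1 / (n : ℝ)) * ∑ i, ws i)
    (μ μs : EuclideanSpace ℝ (Fin d))
    (hμ : μ = (1 / (n : ℝ)) • ∑ i, x i)
    (hμs : μs = (1 / (n : ℝ)) • ∑ i, xs i)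
    (hmom : ∀ v : EuclideanSpace ℝ (Fin d), IsSparseUnitVector d k v →
      ((1 / (n : ℝ)) * ∑ i, ⟪v, x i - μ⟫_ℝ ^ t) ^ 2 ≤ M ^ 2)
    (hmoms : ∀ v : EuclideanSpace ℝ (Fin d), IsSparseUnitVector d k v →
      ((1 / (n : ℝ)) * ∑ i, ⟪v, xs i - μs⟫_ℝ ^ t) ^ 2 ≤ M ^ 2) :
    ∀ v : EuclideanSpace ℝ (Fin d), IsSparseUnitVector d k v →
      ⟪v, μ - μs⟫_ℝ ≤ 2 * M ^ (1 / (t : ℝ)) / (1 - 2 * ε) ^ (1 / (t : ℝ)) := by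
  intro v hv
  have heven : Even t := by
    obtain ⟨m, rfl⟩ := htpow
    exact even_two.pow_of_ne_zero (by rintro rfl; simp at ht)
  have weight_le_one {a : ℝ} (ha : a ^ 2 = a) : a ≤ 1 := by nlinarith [sq_nonneg (a - 1)]
  simp only [one_div_mul_sum_eq_expect] at hwsum hwssum hmom hmoms
  exact (le_abs_self _).trans <| sparse_mean_identifiability_general
    ((normSeminorm ℝ ℝ).comp (innerₛₗ ℝ v)) (by exact_mod_cast one_le_two.trans ht) hε
    (fun i ↦ weight_le_one (hw i)) hwz (fun i ↦ weight_le_one (hws i)) hwsz hwsum hwssum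
    (expect_abs_rpow_le_of_sq_expect_pow_le_sq heven hM.le (hmom v hv))
    (expect_abs_rpow_le_of_sq_expect_pow_le_sq heven hM.le (hmoms v hv))
end

section
/- Let k ≥ 2 be an even integer. For every ε ∈ (0, 1/2) there exist Borel probability distributions D1 and D2 on ℝ such that: (1) d_TV(D1, D2) ≤ 2ε; (2) D1 and D2 each have finite mean, and their k-th central moments satisfy E_{X∼Dj}[(X − μj)^k] ≤ k^{k/2} for j ∈ {1,2}, where μj is the mean of Dj; (3) |μ1 − μ2| ≥ √k · ε^{1−1/k} · (1 − 2ε)^{−1/k}. -/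
open MeasureTheory

/-- The total variation distance between two measures:
`d_TV(P,Q) = sup_A |P(A) − Q(A)|` over measurable sets `A`. -/
noncomputable def tvDist {α : Type*} [MeasurableSpace α]
    (P Q : MeasureTheory.Measure α) : ℝ :=
  ⨆ A : {s : Set α // MeasurableSet s}, |(P A.1).toReal - (Q A.1).toReal|

open ProbabilityTheory

/-!
Compare a point mass at `0` with the law that moves a fraction `p = 2ε` of that mass to a point `a`.
The total variation distance is at most `p` wherever `a` is, while the mean moves by `p a`. The
`r`-th central moment of the second law is at most `p (1 - p) a ^ r`, because
`p ^ (r - 1) + (1 - p) ^ (r - 1) ≤ 1` for `r ≥ 2`; so the moment bound `M ^ r` still allows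
`a = M (p (1 - p)) ^ (-1 / r)`.
-/

section TotalVariation

open unitInterval

variable {α : Type*} [MeasurableSpace α]

lemma tvDist_le_one (P Q : Measure α) [IsProbabilityMeasure P] [IsProbabilityMeasure Q] :
    tvDist P Q ≤ 1 :=
  ciSup_le fun _ ↦ abs_sub_le_of_nonneg_of_le measureReal_nonneg measureReal_le_one
    measureReal_nonneg measureReal_le_one

lemma tvDist_mixture_right (P Q : Measure α) [IsFiniteMeasure P] [IsFiniteMeasure Q] (p : I) :
    tvDist P (toNNReal p • Q + toNNReal (σ p) • P) = p * tvDist P Q := by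
  simp only [tvDist, ← measureReal_def, Real.mul_iSup_of_nonneg p.2.1]
  refine iSup_congr fun A ↦ ?_
  calc |P.real A - (toNNReal p • Q + toNNReal (σ p) • P).real A|
      = |P.real A - (p * Q.real A + (1 - p) * P.real A)| := by
        rw [measureReal_add_apply, measureReal_nnreal_smul_apply, measureReal_nnreal_smul_apply,
          coe_toNNReal, coe_toNNReal, coe_symm_eq]
    _ = |p * (P.real A - Q.real A)| := by ring_nf
    _ = p * |P.real A - Q.real A| := by rw [abs_mul, abs_of_nonneg p.2.1]

lemma tvDist_dirac_bernoulliMeasure_le (x y : α) (p : I) :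
    tvDist (Measure.dirac y) (bernoulliMeasure x y p) ≤ p := by
  rw [bernoulliMeasure_def, tvDist_mixture_right]
  exact mul_le_of_le_one_right p.2.1 (tvDist_le_one _ _)

end TotalVariation

section CentralMoment

lemma mul_one_sub_rpow_add_one_sub_mul_rpow_le {p r : ℝ} (hp0 : 0 ≤ p) (hp1 : p ≤ 1)
    (hr : 2 ≤ r) : p * (1 - p) ^ r + (1 - p) * p ^ r ≤ p * (1 - p) := by
  have hq0 : 0 ≤ 1 - p := sub_nonneg.2 hp1
  have rpow_eq {x : ℝ} (hx : 0 ≤ x) : x ^ r = x * x ^ (r - 1) := by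
    rw [← Real.rpow_one_add' hx (by linarith), add_sub_cancel]
  have sum_le_one : p ^ (r - 1) + (1 - p) ^ (r - 1) ≤ 1 := by
    simpa using Real.add_rpow_le_rpow_add hp0 hq0 (by linarith : 1 ≤ r - 1)
  calc p * (1 - p) ^ r + (1 - p) * p ^ r
      = p * (1 - p) * (p ^ (r - 1) + (1 - p) ^ (r - 1)) := by
        rw [rpow_eq hp0, rpow_eq hq0]
        ring
    _ ≤ p * (1 - p) := mul_le_of_le_one_right (mul_nonneg hp0 hq0) sum_le_one

variable {E : Type*} [NormedAddCommGroup E] [NormedSpace ℝ E] [CompleteSpace E]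
  [MeasurableSpace E] [MeasurableSingletonClass E]

lemma integral_norm_sub_integral_rpow_bernoulliMeasure_le (x y : E) (p : unitInterval) {r : ℝ}
    (hr : 2 ≤ r) :
    ∫ z, ‖z - ∫ w, w ∂bernoulliMeasure x y p‖ ^ r ∂bernoulliMeasure x y p ≤
      p * (1 - p) * ‖x - y‖ ^ r := by
  obtain ⟨hp0, hp1⟩ := p.2
  have hq0 : 0 ≤ 1 - (p : ℝ) := sub_nonneg.2 hp1
  have sub_mean_left : x - ((p : ℝ) • x + (1 - p : ℝ) • y) = (1 - p : ℝ) • (x - y) := by module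
  have sub_mean_right : y - ((p : ℝ) • x + (1 - p : ℝ) • y) = -((p : ℝ) • (x - y)) := by module
  rw [integral_bernoulliMeasure, integral_bernoulliMeasure, sub_mean_left, sub_mean_right, norm_neg,
    norm_smul_of_nonneg hq0, norm_smul_of_nonneg hp0, Real.mul_rpow hq0 (norm_nonneg _),
    Real.mul_rpow hp0 (norm_nonneg _), smul_eq_mul, smul_eq_mul, ← mul_assoc, ← mul_assoc,
    ← add_mul]
  gcongr
  exact mul_one_sub_rpow_add_one_sub_mul_rpow_le hp0 hp1 hr

end CentralMoment

lemma mul_mul_rpow_neg_one_div_rpow {v M r : ℝ} (hv : 0 < v) (hM : 0 ≤ M) (hr : r ≠ 0) :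
    v * (M * v ^ (-(1 / r))) ^ r = M ^ r := by
  rw [Real.mul_rpow hM (by positivity), ← Real.rpow_mul hv.le, neg_mul, one_div_mul_cancel hr,
    Real.rpow_neg_one, mul_left_comm, mul_inv_cancel₀ hv.ne', mul_one]

lemma mul_mul_mul_rpow_neg {p q : ℝ} (hp : 0 < p) (hq : 0 ≤ q) (M t : ℝ) :
    p * (M * (p * q) ^ (-t)) = M * p ^ (1 - t) * q ^ (-t) := by
  rw [Real.mul_rpow hp.le hq, sub_eq_add_neg, Real.rpow_add hp, Real.rpow_one]
  ring

theorem lower_bound_bounded_moments_general (r : ℝ) (hr : 2 ≤ r) (M : ℝ) (hM : 0 ≤ M)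
    (ε : ℝ) (hε0 : 0 < ε) (hε : ε < 1 / 2) :
    ∃ D1 D2 : Measure ℝ, IsProbabilityMeasure D1 ∧ IsProbabilityMeasure D2 ∧
      tvDist D1 D2 ≤ 2 * ε ∧
      Integrable (id : ℝ → ℝ) D1 ∧ Integrable (id : ℝ → ℝ) D2 ∧
      Integrable (fun x => |x - ∫ y, y ∂D1| ^ r) D1 ∧
      Integrable (fun x => |x - ∫ y, y ∂D2| ^ r) D2 ∧
      (∫ x, |x - ∫ y, y ∂D1| ^ r ∂D1) ≤ M ^ r ∧
      (∫ x, |x - ∫ y, y ∂D2| ^ r ∂D2) ≤ M ^ r ∧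
      M * ε ^ (1 - 1 / r) * (1 - 2 * ε) ^ (-(1 / r)) ≤ |(∫ y, y ∂D1) - ∫ y, y ∂D2| := by
  have hr0 : r ≠ 0 := by positivity
  have hp0 : 0 < 2 * ε := by positivity
  have hq0 : 0 < 1 - 2 * ε := by linarith
  let p : unitInterval := ⟨2 * ε, hp0.le, by linarith⟩
  let a : ℝ := M * (2 * ε * (1 - 2 * ε)) ^ (-(1 / r))
  have ha : 0 ≤ a := by positivity
  have mean_eq : ∫ y, y ∂bernoulliMeasure a 0 p = 2 * ε * a := by
    simp [integral_bernoulliMeasure, p]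
  refine ⟨Measure.dirac 0, bernoulliMeasure a 0 p, inferInstance, inferInstance,
    tvDist_dirac_bernoulliMeasure_le a 0 p, integrable_dirac (by simp),
    integrable_bernoulliMeasure .., integrable_dirac (by simp), integrable_bernoulliMeasure ..,
    ?_, ?_, ?_⟩
  · simpa [Real.zero_rpow hr0] using Real.rpow_nonneg hM r
  · calc ∫ x, |x - ∫ y, y ∂bernoulliMeasure a 0 p| ^ r ∂bernoulliMeasure a 0 p
        ≤ 2 * ε * (1 - 2 * ε) * ‖a - 0‖ ^ r :=
          integral_norm_sub_integral_rpow_bernoulliMeasure_le a 0 p hr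
      _ = M ^ r := by
          rw [sub_zero, Real.norm_of_nonneg ha,
            mul_mul_rpow_neg_one_div_rpow (mul_pos hp0 hq0) hM hr0]
  · have exponent_nonneg : 0 ≤ 1 - 1 / r := by
      rw [sub_nonneg, div_le_one (by positivity)]
      linarith
    calc M * ε ^ (1 - 1 / r) * (1 - 2 * ε) ^ (-(1 / r))
        ≤ M * (2 * ε) ^ (1 - 1 / r) * (1 - 2 * ε) ^ (-(1 / r)) := by
          gcongr
          linarith
      _ = 2 * ε * a := (mul_mul_mul_rpow_neg hp0 hq0.le M _).symm
      _ = |(∫ y, y ∂Measure.dirac 0) - ∫ y, y ∂bernoulliMeasure a 0 p| := by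
          rw [mean_eq, integral_dirac, zero_sub, abs_neg, abs_of_nonneg (by positivity)]

/-- Lemma 1.5 of the paper: the information-theoretic lower bound for distributions with
bounded `k`-th moments. For every `ε ∈ (0, 1/2)` there are two one-dimensional
distributions with total variation distance at most `2ε`, `k`-th central moments at most
`k^(k/2)`, and means at least `√k · ε^(1−1/k) · (1 − 2ε)^(−1/k)` apart. -/
theorem lower_bound_bounded_moments (k : ℕ) (hk : 2 ≤ k) (hkeven : Even k)
    (ε : ℝ) (hε0 : 0 < ε) (hε : ε < 1 / 2) :
    ∃ D1 D2 : Measure ℝ, IsProbabilityMeasure D1 ∧ IsProbabilityMeasure D2 ∧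
      tvDist D1 D2 ≤ 2 * ε ∧
      Integrable (id : ℝ → ℝ) D1 ∧ Integrable (id : ℝ → ℝ) D2 ∧
      Integrable (fun x => (x - ∫ y, y ∂D1) ^ k) D1 ∧
      Integrable (fun x => (x - ∫ y, y ∂D2) ^ k) D2 ∧
      (∫ x, (x - ∫ y, y ∂D1) ^ k ∂D1) ≤ (k : ℝ) ^ ((k : ℝ) / 2) ∧
      (∫ x, (x - ∫ y, y ∂D2) ^ k ∂D2) ≤ (k : ℝ) ^ ((k : ℝ) / 2) ∧
      Real.sqrt k * ε ^ (1 - 1 / (k : ℝ)) * (1 - 2 * ε) ^ (-(1 / (k : ℝ))) ≤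
        |(∫ y, y ∂D1) - ∫ y, y ∂D2| := by
  simpa only [Real.rpow_natCast, hkeven.pow_abs, Real.rpow_div_two_eq_sqrt _ k.cast_nonneg] using
    lower_bound_bounded_moments_general k (mod_cast hk) √k (Real.sqrt_nonneg _) ε hε0 hε
end
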